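/- (Mackey-type decomposition for Hecke-like towers.) Let n, m, k, ℓ, N ∈ ℕ with n + m = k + ℓ = N. For each r with max(0, n−ℓ) ≤ r ≤ min(n, k), let w_r ∈ S_N be defined by w_r(i) = i for 1 ≤ i ≤ r, w_r(i) = i − r + k for r < i ≤ n, w_r(i) = i − n + r for n < i ≤ n + k − r, and w_r(i) = i for n + k − r < i ≤ N, and let B'_r ⊆ B_N be the F-linear span of {ρ_{k,ℓ}(u) · T_{w_r} · ρ_{n,m}(v) : u ∈ B_k ⊗ B_ℓ, v ∈ B_n ⊗ B_m}. Then B_N is the internal direct sum of the subspaces B'_r over max(0, n−ℓ) ≤ r ≤ min(n, k), and dim_F B'_r = n! · m! · C(k, r) · C(ℓ, n−r), where C(·,·) denotes the binomial coefficient. -/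

import Mathlib

open scoped TensorProduct

namespace HeckeLikeTower

variable (F : Type*) [Field F]

/-- The defining relations of the Hecke-like algebra of degree `n` over `F` with parameters
`c, d`.  The generators `T_1, …, T_{n-1}` are indexed by `Fin (n-1)`, where the index
`i : Fin (n-1)` corresponds to the generator `T_{i+1}`. -/
inductive Rel (c d : F) (n : ℕ) :
    FreeAlgebra F (Fin (n - 1)) → FreeAlgebra F (Fin (n - 1)) → Prop
  | comm (i j : Fin (n - 1)) (h : (i : ℕ) + 1 < (j : ℕ)) :
      Rel c d n (FreeAlgebra.ι F i * FreeAlgebra.ι F j)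
        (FreeAlgebra.ι F j * FreeAlgebra.ι F i)
  | braid (i j : Fin (n - 1)) (h : (j : ℕ) = (i : ℕ) + 1) :
      Rel c d n (FreeAlgebra.ι F i * FreeAlgebra.ι F j * FreeAlgebra.ι F i)
        (FreeAlgebra.ι F j * FreeAlgebra.ι F i * FreeAlgebra.ι F j)
  | quad (i : Fin (n - 1)) :
      Rel c d n (FreeAlgebra.ι F i * FreeAlgebra.ι F i)
        (c • FreeAlgebra.ι F i + algebraMap F (FreeAlgebra F (Fin (n - 1))) d)

/-- The Hecke-like algebra `B_n` of degree `n` over `F` with parameters `c, d`: the quotient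
of the free associative unital `F`-algebra on `T_1, …, T_{n-1}` by the two-sided ideal
generated by the relations. -/
abbrev B (c d : F) (n : ℕ) : Type _ := RingQuot (Rel F c d n)

/-- The generator `T_{i+1}` of the Hecke-like algebra `B_n` (for `i : Fin (n-1)`). -/
def T (c d : F) (n : ℕ) (i : Fin (n - 1)) : B F c d n :=
  RingQuot.mkAlgHom F (Rel F c d n) (FreeAlgebra.ι F i)

/-- The adjacent transposition `s_{i+1} = (i+1, i+2) ∈ S_n` (for `i : Fin (n-1)`), acting on
`Fin n` by swapping `i` and `i+1` (`0`-based). -/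
def s (n : ℕ) (i : Fin (n - 1)) : Equiv.Perm (Fin n) :=
  Equiv.swap ⟨(i : ℕ), lt_of_lt_of_le i.isLt (Nat.sub_le n 1)⟩
    ⟨(i : ℕ) + 1, by have := i.isLt; omega⟩

/-- The product in `S_n` of the adjacent transpositions along a word. -/
def wordProd (n : ℕ) (l : List (Fin (n - 1))) : Equiv.Perm (Fin n) :=
  (l.map (s n)).prod

/-- The product `T_{i_1} ⋯ T_{i_r}` in `B_n` along a word `(i_1, …, i_r)`. -/
def Tword (c d : F) (n : ℕ) (l : List (Fin (n - 1))) : B F c d n :=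
  (l.map (T F c d n)).prod

/-- `l` is a reduced word for the permutation `w ∈ S_n`: the corresponding product of
adjacent transpositions is `w`, and `l` has minimal length among all such words (its length
is then the Coxeter length `ℓ(w)`). -/
def IsReducedWord (n : ℕ) (w : Equiv.Perm (Fin n)) (l : List (Fin (n - 1))) : Prop :=
  wordProd n l = w ∧
    ∀ l' : List (Fin (n - 1)), wordProd n l' = w → l.length ≤ l'.length

/-- The Coxeter length `ℓ(w)` of `w ∈ S_n` with respect to the adjacent transpositions. -/
noncomputable def len (n : ℕ) (w : Equiv.Perm (Fin n)) : ℕ :=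
  sInf {r | ∃ l : List (Fin (n - 1)), wordProd n l = w ∧ l.length = r}

end HeckeLikeTower

open HeckeLikeTower

namespace HeckeLikeTower

/-- lower position of the `i`-th adjacent transposition -/
def lo {n : ℕ} (i : Fin (n - 1)) : Fin n := ⟨(i : ℕ), lt_of_lt_of_le i.isLt (Nat.sub_le n 1)⟩
/-- upper position of the `i`-th adjacent transposition -/
def hi {n : ℕ} (i : Fin (n - 1)) : Fin n := ⟨(i : ℕ) + 1, by have := i.isLt; omega⟩

lemma s_eq {n : ℕ} (i : Fin (n - 1)) : s n i = Equiv.swap (lo i) (hi i) := rfl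

lemma lo_lt_hi {n : ℕ} (i : Fin (n - 1)) : lo i < hi i := by
  simp [lo, hi, Fin.lt_def]

lemma s_mul_s {n : ℕ} (i : Fin (n - 1)) : s n i * s n i = 1 := by
  rw [s_eq, Equiv.swap_mul_self]

lemma s_inv {n : ℕ} (i : Fin (n - 1)) : (s n i)⁻¹ = s n i := by
  rw [s_eq, Equiv.swap_inv]

lemma s_lo {n : ℕ} (i : Fin (n - 1)) : s n i (lo i) = hi i := by rw [s_eq, Equiv.swap_apply_left]
lemma s_hi {n : ℕ} (i : Fin (n - 1)) : s n i (hi i) = lo i := by rw [s_eq, Equiv.swap_apply_right]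

lemma s_apply_val {n : ℕ} (i : Fin (n - 1)) (a : Fin n) :
    (s n i a : ℕ) = if (a : ℕ) = i then (i : ℕ) + 1 else if (a : ℕ) = i + 1 then (i : ℕ) else a := by
  rw [s_eq, Equiv.swap_apply_def]
  simp only [Fin.ext_iff, lo, hi]
  split_ifs <;> rfl

/-- Set of inversions. -/
def invSet {n : ℕ} (x : Equiv.Perm (Fin n)) : Finset (Fin n × Fin n) :=
  Finset.univ.filter fun p => p.1 < p.2 ∧ x p.2 < x p.1

/-- Number of inversions. -/
def inv {n : ℕ} (x : Equiv.Perm (Fin n)) : ℕ := (invSet x).card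

lemma mem_invSet {n : ℕ} (x : Equiv.Perm (Fin n)) (p : Fin n × Fin n) :
    p ∈ invSet x ↔ p.1 < p.2 ∧ x p.2 < x p.1 := by simp [invSet]

lemma inv_one {n : ℕ} : inv (1 : Equiv.Perm (Fin n)) = 0 := by
  rw [inv, Finset.card_eq_zero, Finset.eq_empty_iff_forall_notMem]
  intro p; rw [mem_invSet]; simp only [Equiv.Perm.one_apply]
  rintro ⟨h1, h2⟩; exact lt_asymm h1 h2

lemma inv_inv {n : ℕ} (x : Equiv.Perm (Fin n)) : inv x⁻¹ = inv x := by
  refine Finset.card_bij (fun p _ => (x⁻¹ p.2, x⁻¹ p.1)) ?_ ?_ ?_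
  · intro p hp; rw [mem_invSet] at *; simpa using hp.symm
  · rintro ⟨a, b⟩ _ ⟨a', b'⟩ _ h
    simp at h
    simp [h.1, h.2]
  · rintro ⟨a, b⟩ h
    refine ⟨(x b, x a), ?_, by simp⟩
    rw [mem_invSet] at *; simpa using h.symm

lemma inv_mul_s {n : ℕ} (x : Equiv.Perm (Fin n)) (i : Fin (n - 1)) (h : x (lo i) < x (hi i)) :
    inv (x * s n i) = inv x + 1 := by
  have key : invSet (x * s n i) = insert (lo i, hi i)
      ((invSet x).map (((s n i).prodCongr (s n i)).toEmbedding)) := by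
    ext ⟨a, b⟩
    rw [Finset.mem_insert, Finset.mem_map_equiv, mem_invSet, mem_invSet]
    have e : ((s n i).prodCongr (s n i)).symm (a, b) = (s n i a, s n i b) := by
      show ((s n i)⁻¹ a, (s n i)⁻¹ b) = _
      rw [s_inv]
    rw [e]
    simp only [Equiv.Perm.mul_apply, Prod.mk.injEq]
    by_cases hab : a = lo i ∧ b = hi i
    · obtain ⟨rfl, rfl⟩ := hab
      simp [s_lo, s_hi, h, lo_lt_hi]
    · by_cases hab' : b = lo i ∧ a = hi i
      · obtain ⟨rfl, rfl⟩ := hab'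
        simp [s_lo, s_hi, h.not_gt, (lo_lt_hi i).not_gt, (lo_lt_hi i).ne']
      · have : a < b ↔ s n i a < s n i b := by
          rw [Fin.lt_def, Fin.lt_def, s_apply_val, s_apply_val]
          simp only [Fin.ext_iff, lo, hi] at hab hab'
          split_ifs <;> omega
        rw [this]
        simp [hab]
  rw [inv, key, Finset.card_insert_of_notMem, Finset.card_map, inv]
  rw [Finset.mem_map_equiv, mem_invSet]
  have e : ((s n i).prodCongr (s n i)).symm (lo i, hi i) = (s n i (lo i), s n i (hi i)) := by
    show ((s n i)⁻¹ _, (s n i)⁻¹ _) = _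
    rw [s_inv]
  rw [e, s_lo, s_hi]
  exact fun h' => (lo_lt_hi i).not_gt h'.1

lemma inv_s_mul {n : ℕ} (x : Equiv.Perm (Fin n)) (i : Fin (n - 1)) (h : x⁻¹ (lo i) < x⁻¹ (hi i)) :
    inv (s n i * x) = inv x + 1 := by
  rw [← inv_inv, mul_inv_rev, s_inv, inv_mul_s _ _ h, inv_inv]

lemma lt_or_gt {n : ℕ} (x : Equiv.Perm (Fin n)) (i : Fin (n - 1)) :
    x (lo i) < x (hi i) ∨ x (hi i) < x (lo i) :=
  lt_or_gt_of_ne (fun h => (lo_lt_hi i).ne (x.injective h))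

lemma inv_mul_s' {n : ℕ} (x : Equiv.Perm (Fin n)) (i : Fin (n - 1)) (h : x (hi i) < x (lo i)) :
    inv (x * s n i) + 1 = inv x := by
  have := inv_mul_s (x * s n i) i (by simpa [s_lo, s_hi] using h)
  rw [mul_assoc, s_mul_s, mul_one] at this
  exact this.symm

lemma inv_s_mul' {n : ℕ} (x : Equiv.Perm (Fin n)) (i : Fin (n - 1)) (h : x⁻¹ (hi i) < x⁻¹ (lo i)) :
    inv (s n i * x) + 1 = inv x := by
  rw [← inv_inv, mul_inv_rev, s_inv, inv_mul_s' _ _ h, inv_inv]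

lemma inv_s_mul_le {n : ℕ} (x : Equiv.Perm (Fin n)) (i : Fin (n - 1)) :
    inv (s n i * x) ≤ inv x + 1 := by
  rcases lt_or_gt x⁻¹ i with h | h
  · exact (inv_s_mul x i h).le
  · have := inv_s_mul' x i h; omega

lemma lt_of_inv {n : ℕ} {x : Equiv.Perm (Fin n)} {i : Fin (n - 1)} (h : inv (s n i * x) = inv x + 1) :
    x⁻¹ (lo i) < x⁻¹ (hi i) := by
  rcases lt_or_gt x⁻¹ i with h' | h'
  · exact h'
  · have := inv_s_mul' x i h'; omega

lemma gt_of_inv {n : ℕ} {x : Equiv.Perm (Fin n)} {i : Fin (n - 1)} (h : inv (s n i * x) + 1 = inv x) :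
    x⁻¹ (hi i) < x⁻¹ (lo i) := by
  rcases lt_or_gt x⁻¹ i with h' | h'
  · have := inv_s_mul x i h'; omega
  · exact h'

lemma step_mono {n : ℕ} (g : Fin n → Fin n) (a b : ℕ)
    (h : ∀ i : Fin (n - 1), a ≤ (i : ℕ) → (i : ℕ) + 1 < b → g (lo i) < g (hi i))
    (p q : Fin n) (hp : a ≤ (p : ℕ)) (hpq : p < q) (hq : (q : ℕ) < b) : g p < g q := by
  obtain ⟨p, hpn⟩ := p
  obtain ⟨q, hqn⟩ := q
  simp only [Fin.mk_lt_mk] at hpq hp hq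
  induction q, hpq using Nat.le_induction with
  | base => exact h ⟨p, by omega⟩ hp hq
  | succ q hpq ih =>
    exact (ih (by omega) (by omega)).trans (h ⟨q, by omega⟩ (by simp; omega) hq)

lemma exists_descent {n : ℕ} (x : Equiv.Perm (Fin n)) (hx : x ≠ 1) :
    ∃ i : Fin (n - 1), x (hi i) < x (lo i) := by
  by_contra! hcon
  apply hx
  have hm : StrictMono x := fun p q hpq => step_mono x 0 n (fun i _ _ =>
    lt_of_le_of_ne (hcon i) (fun h => (lo_lt_hi i).ne (x.injective h))) p q (Nat.zero_le _) hpq q.2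
  have : (hm.orderIsoOfSurjective x x.surjective) = OrderIso.refl _ := Subsingleton.elim _ _
  ext a
  have h2 := congrArg (fun f : Fin n ≃o Fin n => f a) this
  simpa using congrArg Fin.val h2

lemma wordProd_cons {n : ℕ} (i : Fin (n - 1)) (l : List (Fin (n - 1))) :
    wordProd n (i :: l) = s n i * wordProd n l := by simp [wordProd]

lemma inv_le_length {n : ℕ} (l : List (Fin (n - 1))) : inv (wordProd n l) ≤ l.length := by
  induction l with
  | nil => simp [wordProd, inv_one]
  | cons i l ih =>
    rw [wordProd_cons, List.length_cons]
    exact (inv_s_mul_le _ _).trans (by omega)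

lemma exists_word {n : ℕ} (x : Equiv.Perm (Fin n)) :
    ∃ l, wordProd n l = x ∧ l.length = inv x := by
  induction hk : inv x using Nat.strong_induction_on generalizing x with
  | _ k ih =>
    by_cases hx : x = 1
    · subst hx; exact ⟨[], by simp [wordProd], by rw [← hk, inv_one]; rfl⟩
    · obtain ⟨i, hi'⟩ := exists_descent x⁻¹ (by simpa using hx)
      have := inv_s_mul' x i hi'
      obtain ⟨l, hl, hl'⟩ := ih (inv (s n i * x)) (by omega) _ rfl
      refine ⟨i :: l, ?_, ?_⟩
      · rw [wordProd_cons, hl, ← mul_assoc, s_mul_s, one_mul]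
      · rw [List.length_cons]; omega

/-- Reduced words in terms of inversions. -/
def Red {n : ℕ} (x : Equiv.Perm (Fin n)) (l : List (Fin (n - 1))) : Prop :=
  wordProd n l = x ∧ l.length = inv x

lemma IsReducedWord.red {n : ℕ} {x : Equiv.Perm (Fin n)} {l : List (Fin (n - 1))}
    (h : IsReducedWord n x l) : Red x l := by
  obtain ⟨l', h1, h2⟩ := exists_word x
  refine ⟨h.1, le_antisymm (h2 ▸ h.2 l' h1) ?_⟩
  have := inv_le_length l
  rwa [h.1] at this

lemma Red.tail {n : ℕ} {x : Equiv.Perm (Fin n)} {i} {l : List (Fin (n - 1))}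
    (h : Red x (i :: l)) : Red (s n i * x) l ∧ x⁻¹ (hi i) < x⁻¹ (lo i) := by
  obtain ⟨h1, h2⟩ := h
  have e : s n i * x = wordProd n l := by
    rw [← h1, wordProd_cons, ← mul_assoc, s_mul_s, one_mul]
  have h3 := inv_le_length l
  have h4 := inv_s_mul_le (wordProd n l) i
  rw [← wordProd_cons, h1] at h4
  rw [List.length_cons] at h2
  have h5 : inv (s n i * x) + 1 = inv x := by rw [e]; omega
  exact ⟨⟨e.symm, by omega⟩, gt_of_inv h5⟩

lemma Red.cons {n : ℕ} {x : Equiv.Perm (Fin n)} {i} {l : List (Fin (n - 1))}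
    (h : Red (s n i * x) l) (hx : x⁻¹ (hi i) < x⁻¹ (lo i)) : Red x (i :: l) := by
  refine ⟨?_, ?_⟩
  · rw [wordProd_cons, h.1, ← mul_assoc, s_mul_s, one_mul]
  · rw [List.length_cons, h.2, inv_s_mul' x i hx]

lemma s_braid {n : ℕ} (i j : Fin (n - 1)) (h : (j : ℕ) = i + 1) :
    s n i * s n j * s n i = s n j * s n i * s n j := by
  ext a
  simp only [Equiv.Perm.mul_apply, s_apply_val]
  grind

lemma s_comm {n : ℕ} (i j : Fin (n - 1)) (h : (i : ℕ) + 1 < j) :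
    s n i * s n j = s n j * s n i := by
  ext a
  simp only [Equiv.Perm.mul_apply, s_apply_val]
  grind

section alg
variable (F : Type*) [Field F] (c d : F)

lemma T_comm {n : ℕ} (i j : Fin (n - 1)) (h : (i : ℕ) + 1 < j) :
    T F c d n i * T F c d n j = T F c d n j * T F c d n i := by
  have := RingQuot.mkAlgHom_rel F (Rel.comm (F := F) (c := c) (d := d) i j h)
  simpa only [map_mul, T] using this

lemma T_braid {n : ℕ} (i j : Fin (n - 1)) (h : (j : ℕ) = i + 1) :
    T F c d n i * T F c d n j * T F c d n i = T F c d n j * T F c d n i * T F c d n j := by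
  have := RingQuot.mkAlgHom_rel F (Rel.braid (F := F) (c := c) (d := d) i j h)
  simpa only [map_mul, T] using this

lemma T_quad {n : ℕ} (i : Fin (n - 1)) :
    T F c d n i * T F c d n i = c • T F c d n i + d • 1 := by
  have := RingQuot.mkAlgHom_rel F (Rel.quad (F := F) (c := c) (d := d) i)
  simpa only [map_mul, map_add, map_smul, map_one, Algebra.algebraMap_eq_smul_one, T] using this

lemma Tword_cons {n : ℕ} (i : Fin (n - 1)) (l : List (Fin (n - 1))) :
    Tword F c d n (i :: l) = T F c d n i * Tword F c d n l := by simp [Tword]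

lemma s_apply_ne {n : ℕ} (i : Fin (n - 1)) (a : Fin n) (h1 : (a : ℕ) ≠ i) (h2 : (a : ℕ) ≠ i + 1) :
    s n i a = a := by
  ext; rw [s_apply_val, if_neg h1, if_neg h2]

lemma adj {n : ℕ} (i j : Fin (n - 1)) (h : (j : ℕ) = i + 1) : hi i = lo j := by
  ext; simp [hi, lo, h]

/-- Matsumoto: the product along a reduced word depends only on the permutation. -/
lemma matsumoto {n : ℕ} (k : ℕ) : ∀ (x : Equiv.Perm (Fin n)) (l l' : List (Fin (n - 1))),
    l.length = k → Red x l → Red x l' → Tword F c d n l = Tword F c d n l' := by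
  induction k with
  | zero =>
    intro x l l' hk h h'
    have h2 : l'.length = 0 := by rw [h'.2, ← h.2, hk]
    rw [List.length_eq_zero_iff] at hk h2
    rw [hk, h2]
  | succ k ih =>
    intro x l l' hk h h'
    have h2 : l'.length = k + 1 := by rw [h'.2, ← h.2, hk]
    match l, l' with
    | i :: a, j :: b =>
      simp only [List.length_cons, Nat.add_right_cancel_iff] at hk h2
      wlog hij : (i : ℕ) ≤ j generalizing i j a b
      · exact (this j b i a h' h h2 hk (by omega)).symm
      obtain ⟨ha, hi'⟩ := h.tail
      obtain ⟨hb, hj'⟩ := h'.tail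
      rw [Tword_cons, Tword_cons]
      rcases hij.eq_or_lt with hij | hij
      · have : i = j := Fin.ext hij
        subst this
        rw [ih _ a b hk ha hb]
      rcases (Nat.succ_le_of_lt hij).eq_or_lt with hij | hij
      · -- braid
        have hij' : (j : ℕ) = i + 1 := hij.symm
        have e1 : s n j (lo i) = lo i := s_apply_ne _ _ (by simp [lo]; omega) (by simp [lo]; omega)
        have e2 : s n i (hi j) = hi j := s_apply_ne _ _ (by simp [hi]; omega) (by simp [hi]; omega)
        have e3 : hi i = lo j := adj i j hij'
        obtain ⟨e, he⟩ := exists_word (s n i * s n j * s n i * x)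
        rw [e3] at hi'
        have f3 : s n i (lo j) = lo i := by rw [← e3, s_hi]
        have f1 : s n j (lo j) = hi j := s_lo j
        have f2 : s n j (hi j) = lo j := s_hi j
        have f4 : s n i (lo i) = lo j := by rw [← e3, s_lo]
        have r1 : Red (s n j * (s n i * x)) (i :: e) := by
          apply Red.cons
          · have he' : Red _ _ := he
            simpa only [mul_assoc] using he'
          · simp only [mul_inv_rev, s_inv, Equiv.Perm.mul_apply, e3, f1, e1, f4, e2]
            exact hj'
        have r2 : Red (s n i * x) (j :: i :: e) := by
          apply Red.cons r1
          simp only [mul_inv_rev, s_inv, Equiv.Perm.mul_apply, f3, e2]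
          exact hj'.trans hi'
        have r3 : Red (s n i * (s n j * x)) (j :: e) := by
          apply Red.cons
          · have := s_braid i j hij'
            simp only [← mul_assoc]; rw [← this]; exact he
          · simp only [mul_inv_rev, s_inv, Equiv.Perm.mul_apply, f3, e2, e1, f2]
            exact hi'
        have r4 : Red (s n j * x) (i :: j :: e) := by
          apply Red.cons r3
          simp only [mul_inv_rev, s_inv, Equiv.Perm.mul_apply, e3, f1, e1]
          exact hj'.trans hi'
        rw [ih _ _ _ hk ha r2, ih _ _ _ h2 hb r4]
        simp only [Tword_cons, ← mul_assoc]
        rw [T_braid F c d i j hij']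
      · have hij' : (i : ℕ) + 1 < j := hij
        have e1 : s n j (lo i) = lo i := s_apply_ne _ _ (by simp [lo]; omega) (by simp [lo]; omega)
        have e2 : s n j (hi i) = hi i := s_apply_ne _ _ (by simp [hi]; omega) (by simp [hi]; omega)
        have e3 : s n i (lo j) = lo j := s_apply_ne _ _ (by simp [lo]; omega) (by simp [lo]; omega)
        have e4 : s n i (hi j) = hi j := s_apply_ne _ _ (by simp [hi]; omega) (by simp [hi]; omega)
        obtain ⟨e, he⟩ := exists_word (s n i * s n j * x)
        have r1 : Red (s n i * x) (j :: e) := by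
          apply Red.cons
          · rw [← mul_assoc, ← s_comm i j hij']; exact he
          · simp only [mul_inv_rev, s_inv, Equiv.Perm.mul_apply, e3, e4]
            exact hj'
        have r2 : Red (s n j * x) (i :: e) := by
          apply Red.cons
          · rw [← mul_assoc]; exact he
          · simp only [mul_inv_rev, s_inv, Equiv.Perm.mul_apply, e1, e2]
            exact hi'
        rw [ih _ _ _ hk ha r1, ih _ _ _ h2 hb r2]
        simp only [Tword_cons, ← mul_assoc]
        rw [T_comm F c d i j hij']

noncomputable def TT {n : ℕ} (x : Equiv.Perm (Fin n)) : B F c d n :=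
  Tword F c d n (exists_word x).choose

lemma Tword_eq {n : ℕ} {x : Equiv.Perm (Fin n)} {l} (h : Red x l) : Tword F c d n l = TT F c d x :=
  matsumoto F c d _ x _ _ rfl h (exists_word x).choose_spec

lemma TT_one {n : ℕ} : TT F c d (1 : Equiv.Perm (Fin n)) = 1 := by
  rw [← Tword_eq F c d (l := []) ⟨by simp [wordProd], by rw [inv_one]; rfl⟩]
  simp [Tword]

lemma TT_up {n : ℕ} (x : Equiv.Perm (Fin n)) (i) (h : x⁻¹ (lo i) < x⁻¹ (hi i)) :
    T F c d n i * TT F c d x = TT F c d (s n i * x) := by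
  obtain ⟨l, hl⟩ := exists_word x
  have h1 : Red x l := hl
  have : Red (s n i * x) (i :: l) := by
    apply Red.cons
    · rwa [← mul_assoc, s_mul_s, one_mul]
    · simpa [s_inv, s_lo, s_hi] using h
  rw [← Tword_eq F c d h1, ← Tword_eq F c d this, Tword_cons]

lemma TT_down {n : ℕ} (x : Equiv.Perm (Fin n)) (i) (h : x⁻¹ (hi i) < x⁻¹ (lo i)) :
    TT F c d x = T F c d n i * TT F c d (s n i * x) := by
  rw [TT_up]
  · rw [← mul_assoc, s_mul_s, one_mul]
  · simpa [s_inv, s_lo, s_hi] using h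

lemma TT_down' {n : ℕ} (x : Equiv.Perm (Fin n)) (i) (h : x⁻¹ (hi i) < x⁻¹ (lo i)) :
    T F c d n i * TT F c d x = c • TT F c d x + d • TT F c d (s n i * x) := by
  rw [TT_down F c d x i h, ← mul_assoc, T_quad, add_mul, smul_mul_assoc, smul_mul_assoc, one_mul]

lemma TT_rup {n : ℕ} (x : Equiv.Perm (Fin n)) (i) (h : x (lo i) < x (hi i)) :
    TT F c d x * T F c d n i = TT F c d (x * s n i) := by
  obtain ⟨l, hl⟩ := exists_word x
  have h1 : Red x l := hl
  have : Red (x * s n i) (l ++ [i]) := by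
    refine ⟨?_, ?_⟩
    · rw [← hl.1]; simp [wordProd]
    · rw [inv_mul_s x i h, ← hl.2]; simp
  rw [← Tword_eq F c d h1, ← Tword_eq F c d this]
  simp [Tword]

lemma TT_rdown {n : ℕ} (x : Equiv.Perm (Fin n)) (i) (h : x (hi i) < x (lo i)) :
    TT F c d x = TT F c d (x * s n i) * T F c d n i := by
  rw [TT_rup]
  · rw [mul_assoc, s_mul_s, mul_one]
  · simpa [s_lo, s_hi] using h

lemma TT_rdown' {n : ℕ} (x : Equiv.Perm (Fin n)) (i) (h : x (hi i) < x (lo i)) :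
    TT F c d x * T F c d n i = c • TT F c d x + d • TT F c d (x * s n i) := by
  rw [TT_rdown F c d x i h, mul_assoc, T_quad, mul_add, mul_smul_comm, mul_smul_comm, mul_one]

lemma adjoin_T (n : ℕ) : Algebra.adjoin F (Set.range (T F c d n)) = ⊤ := by
  have h : Set.range (T F c d n) = (RingQuot.mkAlgHom F (Rel F c d n)) '' (Set.range (FreeAlgebra.ι F)) := by
    rw [← Set.range_comp]; rfl
  rw [h, ← AlgHom.map_adjoin, FreeAlgebra.adjoin_range_ι, Algebra.map_top,
    AlgHom.range_eq_top]
  exact RingQuot.mkAlgHom_surjective F _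

/-- Left stabilizer of a subspace. -/
def lstab {n : ℕ} (D : Submodule F (B F c d n)) : Subalgebra F (B F c d n) where
  carrier := {b | ∀ z ∈ D, b * z ∈ D}
  mul_mem' {a b} ha hb z hz := by rw [mul_assoc]; exact ha _ (hb _ hz)
  add_mem' {a b} ha hb z hz := by rw [add_mul]; exact D.add_mem (ha _ hz) (hb _ hz)
  algebraMap_mem' r z hz := by
    rw [Algebra.algebraMap_eq_smul_one, smul_mul_assoc, one_mul]; exact D.smul_mem _ hz

/-- Right stabilizer of a subspace. -/
def rstab {n : ℕ} (D : Submodule F (B F c d n)) : Subalgebra F (B F c d n) where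
  carrier := {b | ∀ z ∈ D, z * b ∈ D}
  mul_mem' {a b} ha hb z hz := by rw [← mul_assoc]; exact hb _ (ha _ hz)
  add_mem' {a b} ha hb z hz := by rw [mul_add]; exact D.add_mem (ha _ hz) (hb _ hz)
  algebraMap_mem' r z hz := by
    rw [Algebra.algebraMap_eq_smul_one, mul_smul_comm, mul_one]; exact D.smul_mem _ hz

lemma T_mul_mem {n : ℕ} (P : Set (Equiv.Perm (Fin n))) (i : Fin (n - 1))
    (hP : ∀ x ∈ P, s n i * x ∈ P) :
    T F c d n i ∈ lstab F c d (Submodule.span F (TT F c d '' P)) := by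
  intro z hz
  induction hz using Submodule.span_induction with
  | mem z hz =>
    obtain ⟨x, hx, rfl⟩ := hz
    have h1 := Submodule.subset_span (R := F) (Set.mem_image_of_mem (TT F c d) hx)
    have h2 := Submodule.subset_span (R := F) (Set.mem_image_of_mem (TT F c d) (hP x hx))
    rcases lt_or_gt x⁻¹ i with h | h
    · rw [TT_up F c d x i h]; exact h2
    · rw [TT_down' F c d x i h]
      exact Submodule.add_mem _ (Submodule.smul_mem _ _ h1) (Submodule.smul_mem _ _ h2)
  | zero => simp
  | add a b _ _ ha hb => rw [mul_add]; exact Submodule.add_mem _ ha hb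
  | smul r a _ ha => rw [mul_smul_comm]; exact Submodule.smul_mem _ _ ha

lemma mul_T_mem {n : ℕ} (P : Set (Equiv.Perm (Fin n))) (i : Fin (n - 1))
    (hP : ∀ x ∈ P, x * s n i ∈ P) :
    T F c d n i ∈ rstab F c d (Submodule.span F (TT F c d '' P)) := by
  intro z hz
  induction hz using Submodule.span_induction with
  | mem z hz =>
    obtain ⟨x, hx, rfl⟩ := hz
    have h1 := Submodule.subset_span (R := F) (Set.mem_image_of_mem (TT F c d) hx)
    have h2 := Submodule.subset_span (R := F) (Set.mem_image_of_mem (TT F c d) (hP x hx))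
    rcases lt_or_gt x i with h | h
    · rw [TT_rup F c d x i h]; exact h2
    · rw [TT_rdown' F c d x i h]
      exact Submodule.add_mem _ (Submodule.smul_mem _ _ h1) (Submodule.smul_mem _ _ h2)
  | zero => simp
  | add a b _ _ ha hb => rw [add_mul]; exact Submodule.add_mem _ ha hb
  | smul r a _ ha => rw [smul_mul_assoc]; exact Submodule.smul_mem _ _ ha

lemma span_TT (n : ℕ) : Submodule.span F (Set.range (TT F c d (n := n))) = ⊤ := by
  rw [← Set.image_univ]
  have h : lstab F c d (Submodule.span F (TT F c d (n := n) '' Set.univ)) = ⊤ := by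
    rw [eq_top_iff, ← adjoin_T F c d n]
    apply Algebra.adjoin_le
    rintro _ ⟨i, rfl⟩
    exact T_mul_mem F c d _ i (fun _ _ => trivial)
  rw [eq_top_iff]
  intro b _
  have hb : b ∈ lstab F c d (Submodule.span F (TT F c d (n := n) '' Set.univ)) := by
    rw [h]; trivial
  have := hb 1 (Submodule.subset_span ⟨1, trivial, TT_one F c d⟩)
  rwa [mul_one] at this

/-- The operator `L_i` on the free module on `S_n`. -/
noncomputable def Lop {n : ℕ} (i : Fin (n - 1)) :
    Module.End F (Equiv.Perm (Fin n) →₀ F) :=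
  Finsupp.lsum F fun x => LinearMap.toSpanSingleton F _
    (if x⁻¹ (lo i) < x⁻¹ (hi i) then Finsupp.single (s n i * x) 1
      else c • Finsupp.single x 1 + d • Finsupp.single (s n i * x) 1)

lemma Lop_single {n : ℕ} (i : Fin (n - 1)) (x : Equiv.Perm (Fin n)) :
    Lop F c d i (Finsupp.single x 1) =
    (if x⁻¹ (lo i) < x⁻¹ (hi i) then Finsupp.single (s n i * x) 1
      else c • Finsupp.single x 1 + d • Finsupp.single (s n i * x) 1) := by
  simp [Lop]

lemma Lop_up {n : ℕ} (i : Fin (n - 1)) (x : Equiv.Perm (Fin n)) (h : x⁻¹ (lo i) < x⁻¹ (hi i)) :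
    Lop F c d i (Finsupp.single x 1) = Finsupp.single (s n i * x) 1 := by
  rw [Lop_single, if_pos h]

lemma Lop_down {n : ℕ} (i : Fin (n - 1)) (x : Equiv.Perm (Fin n)) (h : x⁻¹ (hi i) < x⁻¹ (lo i)) :
    Lop F c d i (Finsupp.single x 1) = c • Finsupp.single x 1 + d • Finsupp.single (s n i * x) 1 := by
  rw [Lop_single, if_neg h.not_gt]

lemma s_s_mul {n : ℕ} (i : Fin (n - 1)) (x : Equiv.Perm (Fin n)) : s n i * (s n i * x) = x := by
  rw [← mul_assoc, s_mul_s, one_mul]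

lemma Lop_quad {n : ℕ} (i : Fin (n - 1)) : Lop F c d i * Lop F c d i = c • Lop F c d i + d • 1 := by
  apply Finsupp.lhom_ext'
  intro x
  apply LinearMap.ext_ring
  simp only [LinearMap.comp_apply, Finsupp.lsingle_apply, Module.End.mul_apply, LinearMap.add_apply,
    LinearMap.smul_apply, Module.End.one_apply]
  rcases lt_or_gt x⁻¹ i with h | h
  · rw [Lop_up F c d i x h, Lop_down _ _ _ _ _ (by simpa [s_inv, s_lo, s_hi] using h), s_s_mul]
  · rw [Lop_down F c d i x h, map_add, map_smul, map_smul, Lop_down F c d i x h,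
     Lop_up _ _ _ _ _ (by simpa [s_inv, s_lo, s_hi] using h), s_s_mul]

lemma Lop_comm {n : ℕ} (i j : Fin (n - 1)) (hij : (i : ℕ) + 1 < j) :
    Lop F c d i * Lop F c d j = Lop F c d j * Lop F c d i := by
  apply Finsupp.lhom_ext'
  intro x
  apply LinearMap.ext_ring
  simp only [LinearMap.comp_apply, Finsupp.lsingle_apply, Module.End.mul_apply]
  have e1 : s n j (lo i) = lo i := s_apply_ne _ _ (by simp [lo]; omega) (by simp [lo]; omega)
  have e2 : s n j (hi i) = hi i := s_apply_ne _ _ (by simp [hi]; omega) (by simp [hi]; omega)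
  have e3 : s n i (lo j) = lo j := s_apply_ne _ _ (by simp [lo]; omega) (by simp [lo]; omega)
  have e4 : s n i (hi j) = hi j := s_apply_ne _ _ (by simp [hi]; omega) (by simp [hi]; omega)
  have e5 : s n i * (s n j * x) = s n j * (s n i * x) := by
    rw [← mul_assoc, s_comm i j hij, mul_assoc]
  rcases lt_or_gt x⁻¹ i with h | h <;> rcases lt_or_gt x⁻¹ j with h' | h' <;>
  · have h1 := h.not_gt
    have h2 := h'.not_gt
    simp only [Lop_single, h, h', h1, h2, mul_inv_rev, s_inv, Equiv.Perm.mul_apply, e1, e2, e3, e4, e5,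
      if_true, if_false, map_add, map_smul]
    try module

lemma Lop_braid {n : ℕ} (i j : Fin (n - 1)) (hij : (j : ℕ) = i + 1) :
    Lop F c d i * Lop F c d j * Lop F c d i = Lop F c d j * Lop F c d i * Lop F c d j := by
  apply Finsupp.lhom_ext'
  intro x
  apply LinearMap.ext_ring
  simp only [LinearMap.comp_apply, Finsupp.lsingle_apply, Module.End.mul_apply]
  have e1 : s n j (lo i) = lo i := s_apply_ne _ _ (by simp [lo]; omega) (by simp [lo]; omega)
  have e2 : s n i (hi j) = hi j := s_apply_ne _ _ (by simp [hi]; omega) (by simp [hi]; omega)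
  have e3 : hi i = lo j := adj i j hij
  have f3 : s n i (lo j) = lo i := by rw [← e3, s_hi]
  have f1 : s n j (lo j) = hi j := s_lo j
  have f2 : s n j (hi j) = lo j := s_hi j
  have f4 : s n i (lo i) = lo j := by rw [← e3, s_lo]
  have g1 : s n j * (s n i * (s n j * x)) = s n i * (s n j * (s n i * x)) := by
    have := s_braid i j hij
    simp only [← mul_assoc]; rw [this]
  have h1 := lt_or_gt x⁻¹ i
  have h2 := lt_or_gt x⁻¹ j
  rw [e3] at h1
  have h3 : x⁻¹ (lo i) < x⁻¹ (hi j) ∨ x⁻¹ (hi j) < x⁻¹ (lo i) := by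
    apply lt_or_gt_of_ne
    intro h
    have := x⁻¹.injective h
    simp [lo, hi] at this
    omega
  rcases h1 with h1 | h1 <;> rcases h2 with h2 | h2 <;> rcases h3 with h3 | h3 <;>
  first
  | exact absurd (h1.trans h2) h3.not_gt
  | exact absurd (h2.trans h1) h3.not_gt
  | · have k1 := h1.not_gt
      have k2 := h2.not_gt
      have k3 := h3.not_gt
      simp only [Lop_single, h1, h2, h3, k1, k2, k3, mul_inv_rev, s_inv, Equiv.Perm.mul_apply, e1, e2, e3,
        f1, f2, f3, f4, g1, s_s_mul,
        if_true, if_false, map_add, map_smul]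
      try module

/-- The regular representation. -/
noncomputable def rep (n : ℕ) : B F c d n →ₐ[F] Module.End F (Equiv.Perm (Fin n) →₀ F) :=
  RingQuot.liftAlgHom F ⟨FreeAlgebra.lift F (Lop F c d), by
    intro a b h
    induction h with
    | comm i j h => simpa using Lop_comm F c d i j h
    | braid i j h => simpa using Lop_braid F c d i j h
    | quad i => simpa [Algebra.algebraMap_eq_smul_one] using Lop_quad F c d i⟩

lemma rep_T {n : ℕ} (i : Fin (n - 1)) : rep F c d n (T F c d n i) = Lop F c d i := by
  simp [rep, T]

lemma rep_TT {n : ℕ} (x : Equiv.Perm (Fin n)) :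
    rep F c d n (TT F c d x) (Finsupp.single 1 1) = Finsupp.single x 1 := by
  induction hk : inv x using Nat.strong_induction_on generalizing x with
  | _ k ih =>
    by_cases hx : x = 1
    · subst hx; rw [TT_one]; simp
    · obtain ⟨i, hi'⟩ := exists_descent x⁻¹ (by simpa using hx)
      have := inv_s_mul' x i hi'
      rw [TT_down F c d x i hi', map_mul, Module.End.mul_apply, ih (inv (s n i * x)) (by omega) _ rfl,
        rep_T, Lop_up, s_s_mul]
      simpa [s_inv, s_lo, s_hi] using hi'

lemma linInd_TT (n : ℕ) : LinearIndependent F (TT F c d (n := n)) := by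
  let φ : B F c d n →ₗ[F] (Equiv.Perm (Fin n) →₀ F) :=
    (LinearMap.applyₗ (Finsupp.single 1 1)).comp (rep F c d n).toLinearMap
  apply LinearIndependent.of_comp φ
  have : φ ∘ TT F c d (n := n) = fun x => Finsupp.single x 1 := by
    ext1 x; exact rep_TT F c d x
  rw [this]
  exact Finsupp.linearIndependent_single_one F _

end alg
end HeckeLikeTower

namespace HeckeLikeTower

/-- The double coset invariant. -/
def cls {N : ℕ} (n k : ℕ) (x : Equiv.Perm (Fin N)) : ℕ :=
  (Finset.univ.filter fun i : Fin N => (i : ℕ) < n ∧ (x i : ℕ) < k).card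

lemma cls_inv {N : ℕ} (n k : ℕ) (x : Equiv.Perm (Fin N)) : cls k n x⁻¹ = cls n k x := by
  refine Finset.card_bijective (x⁻¹ : Equiv.Perm (Fin N)) (x⁻¹ : Equiv.Perm (Fin N)).bijective ?_
  intro i; simp [and_comm]

lemma cls_s_mul {N : ℕ} (n k : ℕ) (x : Equiv.Perm (Fin N)) (i : Fin (N - 1)) (h : (i : ℕ) + 1 ≠ k) :
    cls n k (s N i * x) = cls n k x := by
  unfold cls
  congr 1
  ext a
  simp only [Finset.mem_filter, Finset.mem_univ, true_and, Equiv.Perm.mul_apply, s_apply_val]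
  split_ifs <;> omega

lemma cls_mul_s {N : ℕ} (n k : ℕ) (x : Equiv.Perm (Fin N)) (i : Fin (N - 1)) (h : (i : ℕ) + 1 ≠ n) :
    cls n k (x * s N i) = cls n k x := by
  rw [← cls_inv, mul_inv_rev, s_inv, cls_s_mul _ _ _ _ h, cls_inv]

lemma card_lt {N : ℕ} (n : ℕ) (h : n ≤ N) :
    (Finset.univ.filter fun i : Fin N => (i : ℕ) < n).card = n := by
  rw [Fin.card_filter_val_lt]; omega

lemma cls_le {N n k : ℕ} (h : n ≤ N) (x : Equiv.Perm (Fin N)) : cls n k x ≤ n := by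
  conv_rhs => rw [← card_lt (N := N) n h]
  apply Finset.card_le_card
  intro i; simp only [Finset.mem_filter]; tauto

lemma cls_le' {N n k : ℕ} (h : k ≤ N) (x : Equiv.Perm (Fin N)) : cls n k x ≤ k := by
  rw [← cls_inv]; exact cls_le h _

lemma cls_add {N n k : ℕ} (h : n ≤ N) (x : Equiv.Perm (Fin N)) :
    cls n k x + (Finset.univ.filter fun i : Fin N => (i : ℕ) < n ∧ ¬ (x i : ℕ) < k).card = n := by
  conv_rhs => rw [← card_lt (N := N) n h]
  rw [cls, ← Finset.filter_filter, ← Finset.filter_filter, Finset.card_filter_add_card_filter_not]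

lemma le_cls {N n k l : ℕ} (h : n ≤ N) (hkl : k + l = N) (x : Equiv.Perm (Fin N)) :
    n - l ≤ cls n k x := by
  have h1 := cls_add (k := k) h x
  have h2 : (Finset.univ.filter fun i : Fin N => (i : ℕ) < n ∧ ¬ (x i : ℕ) < k).card ≤
      (Finset.univ.filter fun i : Fin N => ¬ (i : ℕ) < k).card := by
    apply Finset.card_le_card_of_injOn x _ x.injective.injOn
    intro i; simp
  have h3 := Finset.card_filter_add_card_filter_not (s := (Finset.univ : Finset (Fin N)))
    (fun i : Fin N => (i : ℕ) < k)
  rw [card_lt k (by omega), Finset.card_univ, Fintype.card_fin] at h3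
  omega

/-- minimality conditions -/
structure IsMin {N : ℕ} (n k : ℕ) (x : Equiv.Perm (Fin N)) : Prop where
  a : ∀ p q : Fin N, p < q → (q : ℕ) < n → x p < x q
  b : ∀ p q : Fin N, p < q → n ≤ (p : ℕ) → x p < x q
  c : ∀ p q : Fin N, p < q → (x p : ℕ) < k → (x q : ℕ) < k → x p < x q
  d : ∀ p q : Fin N, p < q → k ≤ (x p : ℕ) → k ≤ (x q : ℕ) → x p < x q

lemma isMin_of {N : ℕ} (n k : ℕ) (x : Equiv.Perm (Fin N))
    (h1 : ∀ i : Fin (N - 1), (i : ℕ) + 1 ≠ n → x (lo i) < x (hi i))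
    (h2 : ∀ i : Fin (N - 1), (i : ℕ) + 1 ≠ k → x⁻¹ (lo i) < x⁻¹ (hi i)) : IsMin n k x := by
  have aux : ∀ p q : Fin N, (x⁻¹ (x q) ≤ x⁻¹ (x p)) → p < q → False := by
    intro p q h; simpa using h
  refine ⟨?_, ?_, ?_, ?_⟩
  · intro p q hpq hq
    exact step_mono x 0 n (fun i _ hi => h1 i hi.ne) p q (Nat.zero_le _) hpq hq
  · intro p q hpq hp
    exact step_mono x n N (fun i hi _ => h1 i (by omega)) p q hp hpq q.2
  · intro p q hpq hp hq
    by_contra! hcon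
    have hcon := hcon.lt_of_ne (fun h => hpq.ne' (x.injective h))
    exact aux p q (step_mono (x⁻¹ : Equiv.Perm (Fin N)) 0 k (fun i _ hi => h2 i hi.ne) _ _ (Nat.zero_le _) hcon hp).le hpq
  · intro p q hpq hp hq
    by_contra! hcon
    have hcon := hcon.lt_of_ne (fun h => hpq.ne' (x.injective h))
    exact aux p q (step_mono (x⁻¹ : Equiv.Perm (Fin N)) k N (fun i hi _ => h2 i (by omega)) _ _ hq hcon (x p).2).le hpq

lemma IsMin.inv' {N : ℕ} {n k : ℕ} {x : Equiv.Perm (Fin N)} (h : IsMin n k x) : IsMin k n x⁻¹ := by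
  have aux : ∀ p q : Fin N, p < q → ¬ (x⁻¹ p < x⁻¹ q) → x⁻¹ q < x⁻¹ p := by
    intro p q hpq hn
    rw [not_lt] at hn
    exact hn.lt_of_ne (fun h => hpq.ne' (x⁻¹.injective h))
  refine ⟨?_, ?_, ?_, ?_⟩ <;> intro p q hpq
  · intro hq
    by_contra hcon
    have := h.c _ _ (aux p q hpq hcon) (by simpa using hq)
      (by simpa using (show (p : ℕ) < k by have : (p : ℕ) < q := hpq; omega))
    simp at this; exact lt_asymm this hpq
  · intro hq
    by_contra hcon
    have := h.d _ _ (aux p q hpq hcon)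
      (by simpa using (show k ≤ (q : ℕ) by have : (p : ℕ) < q := hpq; omega)) (by simpa using hq)
    simp at this; exact lt_asymm this hpq
  · intro hp hq
    by_contra hcon
    have := h.a _ _ (aux p q hpq hcon) hp
    simp at this; exact lt_asymm this hpq
  · intro hp hq
    by_contra hcon
    have := h.b _ _ (aux p q hpq hcon) hq
    simp at this; exact lt_asymm this hpq

lemma val_eq_card {N : ℕ} (x : Equiv.Perm (Fin N)) (i : Fin N) :
    (x i : ℕ) = (Finset.univ.filter fun j : Fin N => x j < x i).card := by
  rw [← card_lt (N := N) (x i) (x i).2.le]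
  symm
  refine Finset.card_bijective x x.bijective ?_
  intro j; simp

lemma IsMin.lt_iff {N n k : ℕ} (_hn : n ≤ N) {x : Equiv.Perm (Fin N)} (h : IsMin n k x) (i : Fin N) (hi : (i : ℕ) < n) :
    (x i : ℕ) < k ↔ (i : ℕ) < cls n k x := by
  constructor
  · intro hx
    have : (Finset.univ.filter fun j : Fin N => (j : ℕ) < i + 1).card ≤ cls n k x := by
      apply Finset.card_le_card
      intro j
      simp only [Finset.mem_filter, Finset.mem_univ, true_and]
      intro hj
      refine ⟨by omega, ?_⟩
      by_cases hji : j = i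
      · rwa [hji]
      · have : x j < x i := h.a _ _ (lt_of_le_of_ne (by rw [Fin.le_def]; omega) hji) hi
        rw [Fin.lt_def] at this
        omega
    rw [card_lt _ (by omega)] at this
    omega
  · intro hi'
    by_contra hx
    have : cls n k x ≤ (Finset.univ.filter fun j : Fin N => (j : ℕ) < i).card := by
      apply Finset.card_le_card
      intro j
      simp only [Finset.mem_filter, Finset.mem_univ, true_and]
      rintro ⟨h1, h2⟩
      by_contra hji
      have hne : i ≠ j := by rintro rfl; exact hx h2
      have : x i < x j := h.a _ _ (lt_of_le_of_ne (by rw [Fin.le_def]; omega) hne) h1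
      rw [Fin.lt_def] at this
      omega
    rw [card_lt _ (by omega)] at this
    omega

lemma IsMin.fix {N n k : ℕ} {x : Equiv.Perm (Fin N)} (h : IsMin n k x) (i : Fin N)
    (hi : ((i : ℕ) < n ∧ (x i : ℕ) < k) ∨ (n ≤ (i : ℕ) ∧ k ≤ (x i : ℕ))) : x i = i := by
  ext
  rw [val_eq_card]
  conv_rhs => rw [← card_lt (N := N) (i : ℕ) i.2.le]
  congr 1
  ext j
  simp only [Finset.mem_filter, Finset.mem_univ, true_and]
  have ha := h.a
  have hb := h.b
  have hc := h.c
  have hd := h.d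
  simp only [Fin.lt_def] at *
  rcases lt_trichotomy (j : ℕ) i with hji | hji | hji
  · have := ha j i hji
    have := hb j i hji
    have := hc j i hji
    have := hd j i hji
    omega
  · rw [Fin.ext hji]; simp
  · have := ha i j hji
    have := hb i j hji
    have := hc i j hji
    have := hd i j hji
    omega

lemma IsMin.shift {N n k : ℕ} (hn : n ≤ N) (hk : k ≤ N) {x : Equiv.Perm (Fin N)} (h : IsMin n k x) (i : Fin N)
    (hi : (i : ℕ) < n) (hx : k ≤ (x i : ℕ)) : (x i : ℕ) = i - cls n k x + k := by
  have h0 : cls n k x ≤ i := by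
    by_contra hcon
    have := (h.lt_iff hn i hi).2 (by omega)
    omega
  have e : (Finset.univ.filter fun j : Fin N => x j < x i) =
     (Finset.univ.filter fun j : Fin N => (x j : ℕ) < k) ∪
     ((Finset.univ.filter fun j : Fin N => (j : ℕ) < i) \
      (Finset.univ.filter fun j : Fin N => (j : ℕ) < cls n k x)) := by
    ext j
    simp only [Finset.mem_filter, Finset.mem_univ, true_and, Finset.mem_union, Finset.mem_sdiff]
    have ha := h.a
    have hd := h.d
    have h1 := h.lt_iff hn j
    simp only [Fin.lt_def] at *
    rcases lt_trichotomy (j : ℕ) i with hji | hji | hji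
    · have := ha j i hji
      have := hd j i hji
      omega
    · rw [Fin.ext hji]; omega
    · have := hd i j hji
      omega
  have h1 := val_eq_card x i
  rw [e, Finset.card_union_of_disjoint, Finset.card_sdiff_of_subset, card_lt _ (by omega), card_lt _ (by omega)] at h1
  · have h2 : (Finset.univ.filter fun j : Fin N => (x j : ℕ) < k).card = k := by
      conv_rhs => rw [← card_lt (N := N) k hk]
      refine Finset.card_bijective x x.bijective ?_
      intro j; simp
    omega
  · intro j; simp only [Finset.mem_filter, Finset.mem_univ, true_and]; omega
  · rw [Finset.disjoint_left]
    intro j; simp only [Finset.mem_filter, Finset.mem_univ, true_and, Finset.mem_sdiff]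
    intro h1 h2
    have := h.lt_iff hn j
    omega

lemma IsMin.eq {N n k r : ℕ} (hn : n ≤ N) (hk : k ≤ N) {x w : Equiv.Perm (Fin N)} (h : IsMin n k x)
    (hr : cls n k x = r) (hrk : r ≤ k) (hrn : r ≤ n)
    (hw : ∀ i : Fin N,
      ((i : ℕ) < r → w i = i) ∧
      (r ≤ (i : ℕ) → (i : ℕ) < n → ((w i : ℕ) = (i : ℕ) - r + k)) ∧
      (n ≤ (i : ℕ) → (i : ℕ) < n + k - r → ((w i : ℕ) = (i : ℕ) - n + r)) ∧
      (n + k - r ≤ (i : ℕ) → w i = i)) : x = w := by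
  apply Equiv.ext
  intro i
  obtain ⟨w1, w2, w3, w4⟩ := hw i
  by_cases hi : (i : ℕ) < n
  · have h1 := h.lt_iff hn i hi
    by_cases hir : (i : ℕ) < r
    · rw [w1 hir]
      exact h.fix i (Or.inl ⟨hi, h1.2 (by omega)⟩)
    · ext
      rw [w2 (by omega) hi, h.shift hn hk i hi (by omega), hr]
  · by_cases hir : (i : ℕ) < n + k - r
    · have hv : (i : ℕ) - n + r < N := by omega
      have hlt := h.inv'.lt_iff hk ⟨_, hv⟩ (by simp only; omega)
      have hsh := h.inv'.shift hk hn ⟨_, hv⟩ (by simp only; omega)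
      rw [cls_inv, hr] at hlt hsh
      simp only at hlt hsh
      have h3 := hsh (by omega)
      have h4 : x⁻¹ ⟨_, hv⟩ = i := by
        ext; rw [h3]; omega
      have h5 : x i = ⟨_, hv⟩ := (Equiv.Perm.inv_eq_iff_eq.1 h4).symm
      ext
      rw [h5, w3 (by omega) hir]
    · rw [w4 (by omega)]
      apply h.fix i (Or.inr ⟨by omega, ?_⟩)
      by_contra hcon
      have hlt := h.inv'.lt_iff hk (x i) (by omega)
      have hsh := h.inv'.shift hk hn (x i) (by omega)
      rw [cls_inv, hr] at hlt hsh
      simp at hlt hsh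
      have := hsh (by omega)
      omega

lemma cls_w {N n k r : ℕ} (hn : n ≤ N) {w : Equiv.Perm (Fin N)} (hrk : r ≤ k) (hrn : r ≤ n)
    (hw : ∀ i : Fin N,
      ((i : ℕ) < r → w i = i) ∧
      (r ≤ (i : ℕ) → (i : ℕ) < n → ((w i : ℕ) = (i : ℕ) - r + k))) : cls n k w = r := by
  conv_rhs => rw [← card_lt (N := N) r (by omega)]
  unfold cls
  congr 1
  ext i
  simp only [Finset.mem_filter, Finset.mem_univ, true_and]
  obtain ⟨h1, h2⟩ := hw i
  by_cases hi : (i : ℕ) < r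
  · rw [h1 hi]; omega
  · constructor
    · rintro ⟨h3, h4⟩; rw [h2 (by omega) h3] at h4; omega
    · intro h; omega

lemma card_fiber {α : Type*} [Fintype α] [DecidableEq α] (S A : Finset α) (h : S.card = A.card) :
    (Finset.univ.filter fun x : Equiv.Perm α => ∀ i, x i ∈ A ↔ i ∈ S).card =
      S.card.factorial * (Fintype.card α - S.card).factorial := by
  obtain ⟨e⟩ : Nonempty ({a // a ∈ S} ≃ {a // a ∈ A}) := by
    rw [← Fintype.card_eq]; simpa using h
  let σ : Equiv.Perm α := e.extendSubtype
  have hσ : ∀ i, σ i ∈ A ↔ i ∈ S := fun i =>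
    ⟨fun h1 => by_contra fun h2 => e.extendSubtype_not_mem i h2 h1, fun h1 => e.extendSubtype_mem i h1⟩
  have h1 : (Finset.univ.filter fun x : Equiv.Perm α => ∀ i, x i ∈ A ↔ i ∈ S).card =
      Fintype.card {g : Equiv.Perm α // (fun a => decide (a ∈ S)) ∘ g = fun a => decide (a ∈ S)} := by
    rw [Fintype.card_subtype]
    refine Finset.card_bijective (fun x => σ⁻¹ * x) (Group.mulLeft_bijective _) ?_
    intro x
    simp only [Finset.mem_filter, Finset.mem_univ, true_and, funext_iff, Function.comp_apply,
      decide_eq_decide, Equiv.Perm.mul_apply]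
    refine forall_congr' fun i => ?_
    rw [← hσ (σ⁻¹ (x i))]
    simp
  rw [h1, DomMulAct.stabilizer_card, Fintype.prod_bool]
  have h2 : Fintype.card {a // decide (a ∈ S) = true} = S.card := by
    rw [Fintype.card_subtype]; simp
  have h3 : Fintype.card {a // decide (a ∈ S) = false} = Fintype.card α - S.card := by
    rw [Fintype.card_subtype, ← Finset.card_compl]; congr 1; ext; simp
  rw [h2, h3]

lemma card_target {α : Type*} [Fintype α] [DecidableEq α] (K : Finset α) (n r : ℕ) (hr : r ≤ n) :
    (Finset.univ.filter fun A : Finset α => A.card = n ∧ (A ∩ K).card = r).card =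
      K.card.choose r * (Fintype.card α - K.card).choose (n - r) := by
  rw [← Finset.card_compl, ← Finset.card_powersetCard, ← Finset.card_powersetCard,
    ← Finset.card_product]
  refine Finset.card_bij' (fun A _ => (A ∩ K, A ∩ Kᶜ)) (fun p _ => p.1 ∪ p.2) ?_ ?_ ?_ ?_
  · intro A hA
    simp only [Finset.mem_filter, Finset.mem_univ, true_and, Finset.mem_product,
      Finset.mem_powersetCard] at *
    refine ⟨⟨Finset.inter_subset_right, hA.2⟩, Finset.inter_subset_right, ?_⟩
    have := Finset.card_inter_add_card_sdiff A K
    rw [← Finset.sdiff_eq_inter_compl]; omega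
  · rintro ⟨p, q⟩ h
    simp only [Finset.mem_filter, Finset.mem_univ, true_and, Finset.mem_product,
      Finset.mem_powersetCard] at *
    obtain ⟨⟨h1, h2⟩, h3, h4⟩ := h
    have hd : Disjoint p q := Finset.disjoint_of_subset_left h1
      (Finset.disjoint_of_subset_right h3 disjoint_compl_right)
    refine ⟨by rw [Finset.card_union_of_disjoint hd]; omega, ?_⟩
    rw [← h2]; congr 1
    ext a
    have := @h1 a
    have := @h3 a
    simp at *
    tauto
  · intro A hA
    ext a; simp; tauto
  · rintro ⟨p, q⟩ h
    simp only [Finset.mem_product, Finset.mem_powersetCard] at h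
    obtain ⟨⟨h1, h2⟩, h3, h4⟩ := h
    ext a <;> have := @h1 a <;> have := @h3 a <;> simp at * <;> tauto

lemma card_cls {N n m k l r : ℕ} (hnm : n + m = N) (hkl : k + l = N) (hr : r ≤ n) :
    (Finset.univ.filter fun x : Equiv.Perm (Fin N) => cls n k x = r).card =
      n.factorial * m.factorial * k.choose r * l.choose (n - r) := by
  set S : Finset (Fin N) := Finset.univ.filter fun i : Fin N => (i : ℕ) < n with hS
  set K : Finset (Fin N) := Finset.univ.filter fun i : Fin N => (i : ℕ) < k with hK
  have cS : S.card = n := card_lt n (by omega)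
  have cK : K.card = k := card_lt k (by omega)
  have hcls : ∀ x : Equiv.Perm (Fin N), cls n k x = (S.map x.toEmbedding ∩ K).card := by
    intro x
    refine Finset.card_bijective x x.bijective ?_
    intro i; simp [hS, hK]
  have key := Finset.card_eq_sum_card_fiberwise
    (s := Finset.univ.filter fun x : Equiv.Perm (Fin N) => cls n k x = r)
    (t := Finset.univ.filter fun A : Finset (Fin N) => A.card = n ∧ (A ∩ K).card = r)
    (f := fun x => S.map x.toEmbedding) (by
      intro x hx
      simp only [Finset.coe_filter, Finset.mem_univ, true_and, Set.mem_ofPred_eq] at *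
      exact ⟨by rw [Finset.card_map, cS], by rw [← hcls, hx]⟩)
  rw [key, Finset.sum_congr rfl (g := fun _ => n.factorial * m.factorial), Finset.sum_const,
    card_target K n r hr, cK, Fintype.card_fin, smul_eq_mul]
  · rw [show N - k = l by omega]; ring
  · intro A hA
    simp only [Finset.mem_filter, Finset.mem_univ, true_and] at hA
    have := card_fiber S A (by rw [cS, hA.1])
    rw [cS, Fintype.card_fin, show N - n = m by omega] at this
    rw [← this]
    congr 1
    ext x
    simp only [Finset.mem_filter, Finset.mem_univ, true_and]
    constructor
    · rintro ⟨_, rfl⟩ i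
      simp
    · intro h
      have h2 : S.map x.toEmbedding = A := by
        ext a
        rw [Finset.mem_map_equiv, ← h]; simp
      exact ⟨by rw [hcls, h2, hA.2], h2⟩

end HeckeLikeTower

namespace HeckeLikeTower
section final
variable (F : Type*) [Field F] (c d : F)

/-- The span attached to a double coset. -/
abbrev D (N n k r : ℕ) : Submodule F (B F c d N) :=
  Submodule.span F (TT F c d '' {x : Equiv.Perm (Fin N) | cls n k x = r})

lemma range_le {p q N : ℕ} (ρ : B F c d p ⊗[F] B F c d q →ₐ[F] B F c d N)
    (S : Subalgebra F (B F c d N))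
    (h1 : ∀ i, ρ (T F c d p i ⊗ₜ[F] 1) ∈ S) (h2 : ∀ i, ρ (1 ⊗ₜ[F] T F c d q i) ∈ S) (u) : ρ u ∈ S := by
  have g1 : ∀ a, ρ (a ⊗ₜ[F] 1) ∈ S := by
    have : (⊤ : Subalgebra F (B F c d p)) ≤ S.comap (ρ.comp Algebra.TensorProduct.includeLeft) := by
      rw [← adjoin_T F c d p]
      apply Algebra.adjoin_le
      rintro _ ⟨i, rfl⟩
      exact h1 i
    exact fun a => this (show a ∈ ⊤ from trivial)
  have g2 : ∀ a, ρ (1 ⊗ₜ[F] a) ∈ S := by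
    have : (⊤ : Subalgebra F (B F c d q)) ≤ S.comap (ρ.comp Algebra.TensorProduct.includeRight) := by
      rw [← adjoin_T F c d q]
      apply Algebra.adjoin_le
      rintro _ ⟨i, rfl⟩
      exact h2 i
    exact fun a => this (show a ∈ ⊤ from trivial)
  induction u using TensorProduct.induction_on with
  | zero => rw [map_zero]; exact S.zero_mem
  | tmul a b =>
    have : a ⊗ₜ[F] b = (a ⊗ₜ[F] 1) * ((1 : B F c d p) ⊗ₜ[F] b) := by simp
    rw [this, map_mul]
    exact S.mul_mem (g1 a) (g2 b)
  | add a b ha hb => rw [map_add]; exact S.add_mem ha hb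

lemma span_eq (n m k l N r : ℕ)
    (hnm : n + m = N) (hkl : k + l = N)
    (ρkl : B F c d k ⊗[F] B F c d l →ₐ[F] B F c d N)
    (hρkl₁ : ∀ (i : Fin (k - 1)) (h : (i : ℕ) < N - 1),
      ρkl (T F c d k i ⊗ₜ[F] 1) = T F c d N ⟨(i : ℕ), h⟩)
    (hρkl₂ : ∀ (j : Fin (l - 1)) (h : k + (j : ℕ) < N - 1),
      ρkl (1 ⊗ₜ[F] T F c d l j) = T F c d N ⟨k + (j : ℕ), h⟩)
    (ρnm : B F c d n ⊗[F] B F c d m →ₐ[F] B F c d N)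
    (hρnm₁ : ∀ (i : Fin (n - 1)) (h : (i : ℕ) < N - 1),
      ρnm (T F c d n i ⊗ₜ[F] 1) = T F c d N ⟨(i : ℕ), h⟩)
    (hρnm₂ : ∀ (j : Fin (m - 1)) (h : n + (j : ℕ) < N - 1),
      ρnm (1 ⊗ₜ[F] T F c d m j) = T F c d N ⟨n + (j : ℕ), h⟩)
    (w : Equiv.Perm (Fin N)) (hrk : r ≤ k) (hrn : r ≤ n)
    (hw : ∀ i : Fin N,
      ((i : ℕ) < r → w i = i) ∧
      (r ≤ (i : ℕ) → (i : ℕ) < n → ((w i : ℕ) = (i : ℕ) - r + k)) ∧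
      (n ≤ (i : ℕ) → (i : ℕ) < n + k - r → ((w i : ℕ) = (i : ℕ) - n + r)) ∧
      (n + k - r ≤ (i : ℕ) → w i = i))
    (lw : List (Fin (N - 1))) (hlw : IsReducedWord N w lw) :
    Submodule.span F {z : B F c d N | ∃ u v, z = ρkl u * Tword F c d N lw * ρnm v} =
      D F c d N n k r := by
  rw [Tword_eq F c d hlw.red]
  apply le_antisymm
  · rw [Submodule.span_le]
    rintro _ ⟨u, v, rfl⟩
    have hL : ρkl u ∈ lstab F c d (D F c d N n k r) := by
      apply range_le
      · intro i; rw [hρkl₁ i (by have := i.2; omega)]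
        exact T_mul_mem F c d _ _ fun x hx => by
          rw [Set.mem_ofPred_eq] at *
          rw [cls_s_mul _ _ _ _ (by have := i.2; simp only; omega), hx]
      · intro i; rw [hρkl₂ i (by have := i.2; omega)]
        exact T_mul_mem F c d _ _ fun x hx => by
          rw [Set.mem_ofPred_eq] at *
          rw [cls_s_mul _ _ _ _ (by have := i.2; simp only; omega), hx]
    have hR : ρnm v ∈ rstab F c d (D F c d N n k r) := by
      apply range_le
      · intro i; rw [hρnm₁ i (by have := i.2; omega)]
        exact mul_T_mem F c d _ _ fun x hx => by
          rw [Set.mem_ofPred_eq] at *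
          rw [cls_mul_s _ _ _ _ (by have := i.2; simp only; omega), hx]
      · intro i; rw [hρnm₂ i (by have := i.2; omega)]
        exact mul_T_mem F c d _ _ fun x hx => by
          rw [Set.mem_ofPred_eq] at *
          rw [cls_mul_s _ _ _ _ (by have := i.2; simp only; omega), hx]
    exact hR _ (hL _ (Submodule.subset_span
      ⟨w, cls_w (by omega) hrk hrn fun i => ⟨(hw i).1, (hw i).2.1⟩, rfl⟩))
  · set M := Submodule.span F {z : B F c d N | ∃ u v, z = ρkl u * TT F c d w * ρnm v} with hM
    have hL : ∀ u, ∀ z ∈ M, ρkl u * z ∈ M := by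
      intro u z hz
      induction hz using Submodule.span_induction with
      | mem z hz =>
        obtain ⟨u', v, rfl⟩ := hz
        exact Submodule.subset_span ⟨u * u', v, by rw [map_mul]; simp only [mul_assoc]⟩
      | zero => simp
      | add a b _ _ ha hb => rw [mul_add]; exact Submodule.add_mem _ ha hb
      | smul r a _ ha => rw [mul_smul_comm]; exact Submodule.smul_mem _ _ ha
    have hR : ∀ u, ∀ z ∈ M, z * ρnm u ∈ M := by
      intro u z hz
      induction hz using Submodule.span_induction with
      | mem z hz =>
        obtain ⟨u', v, rfl⟩ := hz
        exact Submodule.subset_span ⟨u', v * u, by rw [map_mul]; simp only [mul_assoc]⟩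
      | zero => simp
      | add a b _ _ ha hb => rw [add_mul]; exact Submodule.add_mem _ ha hb
      | smul r a _ ha => rw [smul_mul_assoc]; exact Submodule.smul_mem _ _ ha
    have hL' : ∀ i : Fin (N - 1), (i : ℕ) + 1 ≠ k → ∀ z ∈ M, T F c d N i * z ∈ M := by
      intro i hi z hz
      have hi2 := i.2
      by_cases h : (i : ℕ) < k
      · have := hL (T F c d k ⟨i, by omega⟩ ⊗ₜ[F] 1) z hz
        rwa [hρkl₁ _ (by simp only; omega)] at this
      · have := hL (1 ⊗ₜ[F] T F c d l ⟨i - k, by omega⟩) z hz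
        rw [hρkl₂ _ (by simp only; omega)] at this
        convert this using 3
        ext; simp only; omega
    have hR' : ∀ i : Fin (N - 1), (i : ℕ) + 1 ≠ n → ∀ z ∈ M, z * T F c d N i ∈ M := by
      intro i hi z hz
      have hi2 := i.2
      by_cases h : (i : ℕ) < n
      · have := hR (T F c d n ⟨i, by omega⟩ ⊗ₜ[F] 1) z hz
        rwa [hρnm₁ _ (by simp only; omega)] at this
      · have := hR (1 ⊗ₜ[F] T F c d m ⟨i - n, by omega⟩) z hz
        rw [hρnm₂ _ (by simp only; omega)] at this
        convert this using 3
        ext; simp only; omega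
    rw [Submodule.span_le]
    rintro _ ⟨x, hx, rfl⟩
    rw [Set.mem_ofPred_eq] at hx
    show TT F c d x ∈ M
    induction hk : inv x using Nat.strong_induction_on generalizing x with
    | _ t ih =>
      by_cases h1 : ∃ i : Fin (N - 1), (i : ℕ) + 1 ≠ n ∧ x (hi i) < x (lo i)
      · obtain ⟨i, hi1, hi2⟩ := h1
        have := inv_mul_s' x i hi2
        rw [TT_rdown F c d x i hi2]
        exact hR' i hi1 _ (ih (inv (x * s N i)) (by omega) _ (by rw [cls_mul_s _ _ _ _ hi1, hx]) rfl)
      by_cases h2 : ∃ i : Fin (N - 1), (i : ℕ) + 1 ≠ k ∧ x⁻¹ (hi i) < x⁻¹ (lo i)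
      · obtain ⟨i, hi1, hi2⟩ := h2
        have := inv_s_mul' x i hi2
        rw [TT_down F c d x i hi2]
        exact hL' i hi1 _ (ih (inv (s N i * x)) (by omega) _ (by rw [cls_s_mul _ _ _ _ hi1, hx]) rfl)
      have hmin : IsMin n k x := by
        apply isMin_of
        · intro i hi'
          rcases lt_or_gt x i with h | h
          · exact h
          · exact absurd ⟨i, hi', h⟩ h1
        · intro i hi'
          rcases lt_or_gt x⁻¹ i with h | h
          · exact h
          · exact absurd ⟨i, hi', h⟩ h2
      rw [hmin.eq (by omega) (by omega) hx hrk hrn hw]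
      exact Submodule.subset_span ⟨1, 1, by simp⟩

lemma finrank_D (n m k l N r : ℕ) (hnm : n + m = N) (hkl : k + l = N) (hr : r ≤ n) :
    Module.finrank F (D F c d N n k r) = n.factorial * m.factorial * k.choose r * l.choose (n - r) := by
  rw [← card_cls hnm hkl hr, D, Set.image_eq_range, ← Fintype.card_subtype]
  exact finrank_span_eq_card
    ((linInd_TT F c d N).comp (Subtype.val : {x : Equiv.Perm (Fin N) // cls n k x = r} → _)
      Subtype.val_injective)

lemma internal_D (n k l N : ℕ) (hn : n ≤ N) (hkl : k + l = N) :
    DirectSum.IsInternal (fun r : {r : ℕ // n - l ≤ r ∧ r ≤ min n k} => D F c d N n k r.1) := by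
  apply DirectSum.isInternal_submodule_of_iSupIndep_of_iSup_eq_top
  · intro r
    have : ⨆ j, ⨆ (_ : j ≠ r), D F c d N n k j.1 ≤
        Submodule.span F (TT F c d '' {x : Equiv.Perm (Fin N) | cls n k x ≠ r.1}) := by
      refine iSup_le fun j => iSup_le fun hj => Submodule.span_mono (Set.image_mono ?_)
      intro x hx
      rw [Set.mem_ofPred_eq] at *
      rw [hx]; exact fun h => hj (Subtype.ext h)
    refine Disjoint.mono_right this ((linInd_TT F c d N).disjoint_span_image ?_)
    rw [Set.disjoint_left]
    intro x hx hx'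
    exact hx' hx
  · rw [eq_top_iff, ← span_TT F c d N, Submodule.span_le]
    rintro _ ⟨x, rfl⟩
    refine Submodule.mem_iSup_of_mem ⟨cls n k x, le_cls hn hkl x, le_min (cls_le hn x)
      (cls_le' (by omega) x)⟩ ?_
    exact Submodule.subset_span ⟨x, rfl, rfl⟩

end final
end HeckeLikeTower

/-- Mackey-type decomposition for Hecke-like towers: let
`n + m = k + l = N`.  For each `r` with `max(0, n−l) ≤ r ≤ min(n, k)` let `w_r ∈ S_N` be the
double coset representative defined piecewise as in the paper, and let
`B'_r = span_F {ρ_{k,l}(u) · T_{w_r} · ρ_{n,m}(v)}`.  Then `B_N` is the internal direct sum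
of the subspaces `B'_r`, and `dim_F B'_r = n!·m!·C(k,r)·C(l,n−r)`.
Here `ρ_{k,l}` and `ρ_{n,m}` are the external multiplication algebra homomorphisms,
determined by `ρ(T_i ⊗ 1) = T_i`, `ρ(1 ⊗ T_j) = T_{k+j}` (resp. `T_{n+j}`). -/
theorem heckeLike_mackey (F : Type*) [Field F] (c d : F) (n m k l N : ℕ)
    (hnm : n + m = N) (hkl : k + l = N)
    (ρkl : B F c d k ⊗[F] B F c d l →ₐ[F] B F c d N)
    (hρkl₁ : ∀ i : Fin (k - 1),
      ρkl (T F c d k i ⊗ₜ[F] 1) = T F c d N ⟨(i : ℕ), by have := i.isLt; omega⟩)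
    (hρkl₂ : ∀ j : Fin (l - 1),
      ρkl (1 ⊗ₜ[F] T F c d l j) = T F c d N ⟨k + (j : ℕ), by have := j.isLt; omega⟩)
    (ρnm : B F c d n ⊗[F] B F c d m →ₐ[F] B F c d N)
    (hρnm₁ : ∀ i : Fin (n - 1),
      ρnm (T F c d n i ⊗ₜ[F] 1) = T F c d N ⟨(i : ℕ), by have := i.isLt; omega⟩)
    (hρnm₂ : ∀ j : Fin (m - 1),
      ρnm (1 ⊗ₜ[F] T F c d m j) = T F c d N ⟨n + (j : ℕ), by have := j.isLt; omega⟩)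
    (w : ℕ → Equiv.Perm (Fin N))
    (hw : ∀ r, n - l ≤ r → r ≤ min n k → ∀ i : Fin N,
      ((i : ℕ) < r → w r i = i) ∧
      (r ≤ (i : ℕ) → (i : ℕ) < n → ((w r i : ℕ) = (i : ℕ) - r + k)) ∧
      (n ≤ (i : ℕ) → (i : ℕ) < n + k - r → ((w r i : ℕ) = (i : ℕ) - n + r)) ∧
      (n + k - r ≤ (i : ℕ) → w r i = i))
    (lw : ℕ → List (Fin (N - 1)))
    (hlw : ∀ r, n - l ≤ r → r ≤ min n k → IsReducedWord N (w r) (lw r)) :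
    DirectSum.IsInternal (fun r : {r : ℕ // n - l ≤ r ∧ r ≤ min n k} =>
      Submodule.span F {z : B F c d N |
        ∃ u v, z = ρkl u * Tword F c d N (lw r.1) * ρnm v}) ∧
    (∀ r : ℕ, n - l ≤ r → r ≤ min n k →
      Module.finrank F (Submodule.span F {z : B F c d N |
        ∃ u v, z = ρkl u * Tword F c d N (lw r) * ρnm v}) =
      Nat.factorial n * Nat.factorial m * Nat.choose k r * Nat.choose l (n - r)) := by
  have key : ∀ r, n - l ≤ r → r ≤ min n k → Submodule.span F {z : B F c d N |
        ∃ u v, z = ρkl u * Tword F c d N (lw r) * ρnm v} = D F c d N n k r := fun r h1 h2 =>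
    span_eq F c d n m k l N r hnm hkl ρkl (fun i _ => hρkl₁ i) (fun i _ => hρkl₂ i) ρnm
      (fun i _ => hρnm₁ i) (fun i _ => hρnm₂ i) (w r)
      (h2.trans (min_le_right _ _)) (h2.trans (min_le_left _ _)) (hw r h1 h2) (lw r) (hlw r h1 h2)
  constructor
  · have e : (fun r : {r : ℕ // n - l ≤ r ∧ r ≤ min n k} =>
      Submodule.span F {z : B F c d N |
        ∃ u v, z = ρkl u * Tword F c d N (lw r.1) * ρnm v}) = fun r => D F c d N n k r.1 :=
      funext fun r => key r.1 r.2.1 r.2.2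
    rw [e]
    exact internal_D F c d n k l N (by omega) hkl
  · intro r h1 h2
    rw [key r h1 h2]
    exact finrank_D F c d n m k l N r hnm hkl (h2.trans (min_le_left _ _))
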